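/- Necessity of the termination assumption: there exist a transition system (a type S of states, a total successor relation step, a set Term of terminal states whose only successor is themselves, and a cost valuation c : S → ℤ), a state s₀ ∈ S, and a map χ : S → ℝ satisfying the insufficiency preservation condition at every state reachable from s₀ and the insufficiency on termination condition at every terminal state reachable from s₀, such that: no run from s₀ ever visits a terminal state; along every run ρ from s₀ the sequence c(ρ n) − c(s₀) is eventually constant with limit 6 (so the total incurred cost of every run from s₀ is 6); and χ(s₀) = 7 > 6. Hence without the termination assumption an anti-potential function need not lower-bound the incurred cost. -/

import Mathlib

/-- A run of the transition system from state `s`. -/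
def IsRun {S : Type*} (step : S → S → Prop) (s : S) (ρ : ℕ → S) : Prop :=
  ρ 0 = s ∧ ∀ n, step (ρ n) (ρ (n + 1))

/-- `s'` is reachable from `s`. -/
def ReachableFrom {S : Type*} (step : S → S → Prop) (s s' : S) : Prop :=
  ∃ ρ n, IsRun step s ρ ∧ ρ n = s'

/-- `s'` is reachable from some initial state in `Init`. -/
def Reachable {S : Type*} (step : S → S → Prop) (Init : Set S) (s' : S) : Prop :=
  ∃ s ∈ Init, ReachableFrom step s s'

/-- The system is terminating: every run from a reachable state visits a terminal state. -/
def Terminating {S : Type*} (step : S → S → Prop) (Term Init : Set S) : Prop :=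
  ∀ s, Reachable step Init s → ∀ ρ, IsRun step s ρ → ∃ n, ρ n ∈ Term

/-- The cost of a run: `c (ρ N) - c (ρ 0)` where `N` is the least index with `ρ N ∈ Term`. -/
noncomputable def RunCost {S : Type*} (Term : Set S) (c : S → ℤ) (ρ : ℕ → S) : ℤ :=
  c (ρ (sInf {n | ρ n ∈ Term})) - c (ρ 0)

/-- Potential function: sufficiency preservation and sufficiency on termination. -/
def IsPF {S : Type*} (step : S → S → Prop) (Term Init : Set S) (c : S → ℤ)
    (φ : S → ℝ) : Prop :=
  (∀ s s', Reachable step Init s → step s s' →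
    φ s ≥ φ s' + ((c s' : ℝ) - (c s : ℝ))) ∧
  (∀ s, Reachable step Init s → s ∈ Term → φ s ≥ 0)

/-- Anti-potential function: insufficiency preservation and insufficiency on termination. -/
def IsAntiPF {S : Type*} (step : S → S → Prop) (Term Init : Set S) (c : S → ℤ)
    (χ : S → ℝ) : Prop :=
  (∀ s s', Reachable step Init s → step s s' →
    χ s ≤ χ s' + ((c s' : ℝ) - (c s : ℝ))) ∧
  (∀ s, Reachable step Init s → s ∈ Term → χ s ≤ 0)

/-- necessity of the termination assumption. There is a (non-terminating)
transition system with a map `χ` satisfying insufficiency preservation and insufficiency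
on termination at all states reachable from `s₀`, such that every run from `s₀` avoids
terminal states, every run incurs total cost exactly `6`, yet `χ s₀ = 7 > 6`. -/
theorem antipotential_needs_termination :
    ∃ (S : Type) (step : S → S → Prop) (Term : Set S) (c : S → ℤ) (s₀ : S) (χ : S → ℝ),
      (∀ s : S, ∃ s', step s s') ∧
      (∀ s ∈ Term, ∀ s', step s s' → s' = s) ∧
      (∀ s s', ReachableFrom step s₀ s → step s s' →
        χ s ≤ χ s' + ((c s' : ℝ) - (c s : ℝ))) ∧
      (∀ s, ReachableFrom step s₀ s → s ∈ Term → χ s ≤ 0) ∧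
      (∀ ρ : ℕ → S, IsRun step s₀ ρ → ∀ n, ρ n ∉ Term) ∧
      (∀ ρ : ℕ → S, IsRun step s₀ ρ → ∃ N, ∀ n ≥ N, c (ρ n) - c s₀ = 6) ∧
      χ s₀ = 7 ∧ (7 : ℝ) > 6 := by
  refine ⟨Bool, fun _ s' => s' = true, ∅, fun s => if s then 6 else 0, false, fun _ => 7,
    fun _ => ⟨true, rfl⟩, by simp, ?_, by simp, by simp, ?_, rfl, by norm_num⟩
  · rintro s _ - rfl
    cases s <;> norm_num
  · rintro ρ ⟨-, hstep⟩
    refine ⟨1, fun n hn => ?_⟩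
    obtain ⟨m, rfl⟩ := Nat.exists_eq_add_of_le' hn
    simp [hstep m]
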